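/- arXiv:2602.22081 — 3 statements merged into one kernel-verified Lean document; each statement's English description precedes it below -/
import Mathlib

section
/- Let M, L, L', w be positive integers such that w > M ≥ 3, M divides w, L = (2w/M - 1)·L', and every prime factor of L' is at least 2w - 1. If there exists an equi-difference CAC of length L' and weight w with (L' - 1)/(2w - 2) codewords, then there exists an MC-CAC of length L and weight w in M channels having M(M-1)L/((2w-M)(w-1)) + M(L-1)/(2w-2) codewords. -/
/-- The set of nonzero differences of a subset `S ⊆ Z_L`. -/
def dstar {L : ℕ} (S : Finset (ZMod L)) : Finset (ZMod L) :=
  ((S ×ˢ S).image fun p => p.1 - p.2).erase 0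

/-- A conflict-avoiding code of length `L` and weight `w`. -/
def IsCAC (L w : ℕ) (C : Finset (Finset (ZMod L))) : Prop :=
  (∀ S ∈ C, S.card = w) ∧
  ∀ S ∈ C, ∀ S' ∈ C, S ≠ S' → Disjoint (dstar S) (dstar S')

/-- A codeword is equi-difference if it is of the form `{0, g, 2g, …, (w-1)g}`. -/
def IsEquiDiff {L : ℕ} (w : ℕ) (S : Finset (ZMod L)) : Prop :=
  ∃ g : ZMod L, S = (Finset.range w).image fun j : ℕ => (j : ZMod L) * g

/-- The set of time slots used by codeword `S` on channel `i`. -/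
def chan {M L : ℕ} (S : Finset (Fin M × ZMod L)) (i : Fin M) : Finset (ZMod L) :=
  (S.filter fun p => p.1 = i).image Prod.snd

/-- The `(i,j)` set of differences of a codeword `S ⊆ {1,…,M} × Z_L`
(with `0` removed when `i = j`). -/
def Darr {M L : ℕ} (S : Finset (Fin M × ZMod L)) (i j : Fin M) : Finset (ZMod L) :=
  if i = j then (((chan S i) ×ˢ (chan S j)).image fun p => p.1 - p.2).erase 0
  else ((chan S i) ×ˢ (chan S j)).image fun p => p.1 - p.2

/-- A multichannel conflict-avoiding code of length `L` and weight `w` in `M` channels. -/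
def IsMCCAC (M L w : ℕ) (C : Finset (Finset (Fin M × ZMod L))) : Prop :=
  (∀ S ∈ C, S.card = w) ∧
  ∀ S ∈ C, ∀ S' ∈ C, S ≠ S' → ∀ i j : Fin M, Disjoint (Darr S i j) (Darr S' i j)

/-!
Write `w = M * k` and identify `ZMod ((2 * k - 1) * L')` with `ZMod (2 * k - 1) × ZMod L'`.
Number the points `(i, x)` of `Fin M × Fin k` as `u = x + k * i`. For each `a : ZMod L'`, the
points `(x, a * u)`, placed on channel `i`, form a codeword. Consider the difference of the
points numbered `u = x + k * i` and `v = y + k * j`. Since `|x - y| < k`, its first coordinate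
determines the integer `x - y`, and hence, given `i` and `j`, the integer `u - v`. This is
nonzero of absolute value less than `w`, so it is a unit modulo `L'`, and the second coordinate
`a * (u - v)` determines `a`. Within a single channel the first coordinate never vanishes,
which leaves room for a copy of the given code, with first coordinate `0`, on each of the `M`
channels.
-/

section Arithmetic

theorem coprime_of_forall_prime_le {w n d : ℕ} (hn : ∀ p : ℕ, p.Prime → p ∣ n → w ≤ p)
    (hd : d ≠ 0) (hdw : d < w) : d.Coprime n :=
  Nat.coprime_of_dvd fun p hp hpd hpn =>
    ((Nat.le_of_dvd (Nat.pos_of_ne_zero hd) hpd).trans_lt hdw).not_ge (hn p hp hpn)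

theorem isUnit_natCast_sub_natCast {w n : ℕ} (hn : ∀ p : ℕ, p.Prime → p ∣ n → w ≤ p)
    {u v : Fin w} (huv : u ≠ v) : IsUnit ((u : ZMod n) - (v : ZMod n)) := by
  wlog hvu : v < u generalizing u v
  · rw [← neg_sub, IsUnit.neg_iff]
    exact this huv.symm (lt_of_le_of_ne (not_lt.mp hvu) huv)
  rw [← Nat.cast_sub hvu.le, ZMod.isUnit_iff_coprime]
  exact coprime_of_forall_prime_le hn (by omega) (by omega)

theorem add_eq_add_of_natCast_sub_eq {k m : ℕ} (hm : 2 * k ≤ m + 1) {x y x' y' : Fin k}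
    (h : (x : ZMod m) - (y : ZMod m) = (x' : ZMod m) - (y' : ZMod m)) :
    (x + y' : ℕ) = x' + y := by
  rw [sub_eq_sub_iff_add_eq_add] at h
  refine CharP.natCast_injOn_Iio (ZMod m) m ?_ ?_ (by exact_mod_cast h) <;>
    simp only [Set.mem_Iio] <;> omega

theorem add_mul_eq_div_add_div {K : Type*} [Field K] {M k n c : K} (hM : M ≠ 0) (hk : 2 * k - 1 ≠ 0)
    (hw : 2 * (M * k) - 2 ≠ 0) (hc : c * (2 * (M * k) - 2) = n - 1) :
    n + M * c =
      M * (M - 1) * ((2 * k - 1) * n) / ((2 * (M * k) - M) * (M * k - 1))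
        + M * ((2 * k - 1) * n - 1) / (2 * (M * k) - 2) := by
  obtain ⟨h2, hw'⟩ : (2 : K) ≠ 0 ∧ M * k - 1 ≠ 0 := mul_ne_zero_iff.mp (by convert hw using 1; ring)
  rw [show 2 * (M * k) - M = M * (2 * k - 1) by ring,
    show 2 * (M * k) - 2 = 2 * (M * k - 1) by ring, eq_add_of_sub_eq hc.symm]
  field_simp
  ring

end Arithmetic

theorem mem_dstar {L : ℕ} {S : Finset (ZMod L)} {z : ZMod L} :
    z ∈ dstar S ↔ z ≠ 0 ∧ ∃ s ∈ S, ∃ t ∈ S, s - t = z := by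
  simp only [dstar, Finset.mem_erase, Finset.mem_image, Finset.mem_product, Prod.exists]
  grind

section Codewords

variable {M L : ℕ}

theorem mem_chan {S : Finset (Fin M × ZMod L)} {i : Fin M} {t : ZMod L} :
    t ∈ chan S i ↔ (i, t) ∈ S := by
  simp [chan]

theorem mem_Darr {S : Finset (Fin M × ZMod L)} {i j : Fin M} {z : ZMod L} :
    z ∈ Darr S i j ↔ (∃ s t, (i, s) ∈ S ∧ (j, t) ∈ S ∧ s - t = z) ∧ (i = j → z ≠ 0) := by
  by_cases hij : i = j <;>
    simp only [Darr, hij, ↓reduceIte, Finset.mem_erase, Finset.mem_image, Finset.mem_product,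
      mem_chan, Prod.exists] <;>
    grind

theorem exists_Darr_nonempty {S : Finset (Fin M × ZMod L)} (hS : 1 < S.card) :
    ∃ i j, (Darr S i j).Nonempty := by
  obtain ⟨⟨i, s⟩, hs, ⟨j, t⟩, ht, hne⟩ := Finset.one_lt_card.mp hS
  exact ⟨i, j, s - t, mem_Darr.mpr ⟨⟨s, t, hs, ht, rfl⟩, fun hij hst =>
    hne (Prod.ext hij (sub_eq_zero.mp hst))⟩⟩

/-- Two codewords are conflict-free if their arrays of differences are disjoint entry by entry;
this is the condition that `IsMCCAC` imposes on distinct codewords. -/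
def ConflictFree (S T : Finset (Fin M × ZMod L)) : Prop :=
  ∀ i j, Disjoint (Darr S i j) (Darr T i j)

theorem ConflictFree.symm {S T : Finset (Fin M × ZMod L)} (h : ConflictFree S T) :
    ConflictFree T S :=
  fun i j => (h i j).symm

theorem ConflictFree.ne {S T : Finset (Fin M × ZMod L)} (h : ConflictFree S T)
    (hS : 1 < S.card) : S ≠ T := by
  rintro rfl
  obtain ⟨i, j, hij⟩ := exists_Darr_nonempty hS
  exact hij.ne_empty (disjoint_self.mp (h i j))

theorem exists_isMCCAC_of_pairwise_conflictFree {w : ℕ} {ι : Type*} [Fintype ι] (hw : 1 < w)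
    (f : ι → Finset (Fin M × ZMod L)) (hcard : ∀ a, (f a).card = w)
    (hf : Pairwise fun a b => ConflictFree (f a) (f b)) :
    ∃ C, IsMCCAC M L w C ∧ C.card = Fintype.card ι := by
  classical
  have hinj : Function.Injective f := fun a b hab => by
    by_contra hne
    exact (hf hne).ne (by rwa [hcard]) hab
  refine ⟨Finset.univ.image f, ⟨?_, ?_⟩, Finset.card_image_of_injective _ hinj⟩
  · simpa using hcard
  · simp only [Finset.mem_image, Finset.mem_univ, true_and, forall_exists_index,
      forall_apply_eq_imp_iff]
    exact fun a b hab => hf (ne_of_apply_ne f hab)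

end Codewords

section Construction

variable {M L k m n : ℕ} (e : ZMod L ≃+ ZMod m × ZMod n)

/-- The codeword with multiplier `a` that uses every channel `k` times: on channel `i` it consists
of the time slots `(x, a * (x + k * i))` for `x < k`, where `e` splits time into two coordinates.
The number `x + k * i` is encoded as `finProdFinEquiv (i, x)`. -/
def spreadCodeword (M k : ℕ) (a : ZMod n) : Finset (Fin M × ZMod L) :=
  Finset.univ.image fun p : Fin M × Fin k =>
    (p.1, e.symm ((p.2 : ZMod m), a * (finProdFinEquiv p : ZMod n)))

/-- The copy of a single-channel codeword `S` on channel `i`, with first time coordinate `0`. -/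
def channelCodeword (i : Fin M) (S : Finset (ZMod n)) : Finset (Fin M × ZMod L) :=
  S.image fun s => (i, e.symm (0, s))

variable {e}

theorem mem_spreadCodeword {a : ZMod n} {i : Fin M} {t : ZMod L} :
    (i, t) ∈ spreadCodeword e M k a ↔
      ∃ x : Fin k, e t = ((x : ZMod m), a * (finProdFinEquiv (i, x) : ZMod n)) := by
  simp only [spreadCodeword, Finset.mem_image, Finset.mem_univ, true_and, Prod.mk.injEq,
    AddEquiv.symm_apply_eq]
  grind

theorem mem_channelCodeword {i j : Fin M} {S : Finset (ZMod n)} {t : ZMod L} :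
    (j, t) ∈ channelCodeword e i S ↔ j = i ∧ ∃ s ∈ S, e t = (0, s) := by
  simp only [channelCodeword, Finset.mem_image, Prod.mk.injEq, AddEquiv.symm_apply_eq]
  grind

theorem card_spreadCodeword (hm : 2 * k ≤ m + 1) (a : ZMod n) :
    (spreadCodeword e M k a).card = M * k := by
  rw [spreadCodeword, Finset.card_image_of_injective]
  · simp
  · rintro ⟨i, x⟩ ⟨j, y⟩ hxy
    obtain ⟨rfl, hxy, -⟩ : i = j ∧ (x : ZMod m) = y ∧ _ := by simpa using hxy
    have : (x + x : ℕ) = y + x := add_eq_add_of_natCast_sub_eq hm (by rw [hxy])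
    exact congrArg _ (Fin.ext (by omega))

theorem card_channelCodeword (i : Fin M) (S : Finset (ZMod n)) :
    (channelCodeword e i S).card = S.card :=
  Finset.card_image_of_injective _ fun s t hst => by simpa using hst

theorem exists_of_mem_Darr_spreadCodeword {a : ZMod n} {i j : Fin M} {z : ZMod L}
    (hz : z ∈ Darr (spreadCodeword e M k a) i j) :
    ∃ x y : Fin k, (i, x) ≠ (j, y) ∧
      e z = ((x : ZMod m) - y,
        a * ((finProdFinEquiv (i, x) : ZMod n) - (finProdFinEquiv (j, y) : ZMod n))) := by
  obtain ⟨⟨s, t, hs, ht, rfl⟩, hne⟩ := mem_Darr.mp hz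
  obtain ⟨x, hx⟩ := mem_spreadCodeword.mp hs
  obtain ⟨y, hy⟩ := mem_spreadCodeword.mp ht
  refine ⟨x, y, fun hxy => ?_, by rw [map_sub, hx, hy, Prod.mk_sub_mk, mul_sub]⟩
  obtain ⟨rfl, rfl⟩ := Prod.mk.inj hxy
  exact hne rfl (sub_eq_zero.mpr (e.injective (hx.trans hy.symm)))

theorem exists_of_mem_Darr_channelCodeword {i j j' : Fin M} {S : Finset (ZMod n)} {z : ZMod L}
    (hz : z ∈ Darr (channelCodeword e i S) j j') :
    j = i ∧ j' = i ∧ ∃ d ∈ dstar S, e z = (0, d) := by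
  obtain ⟨⟨s, t, hs, ht, rfl⟩, hne⟩ := mem_Darr.mp hz
  obtain ⟨rfl, s', hs', hes⟩ := mem_channelCodeword.mp hs
  obtain ⟨rfl, t', ht', het⟩ := mem_channelCodeword.mp ht
  refine ⟨rfl, rfl, s' - t', mem_dstar.mpr ⟨fun hst => ?_, s', hs', t', ht', rfl⟩, ?_⟩
  · rw [sub_eq_zero.mp hst] at hes
    exact hne rfl (sub_eq_zero.mpr (e.injective (hes.trans het.symm)))
  · rw [map_sub, hes, het, Prod.mk_sub_mk, sub_zero]

theorem conflictFree_spreadCodeword (hm : 2 * k ≤ m + 1)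
    (hn : ∀ p : ℕ, p.Prime → p ∣ n → M * k ≤ p) {a b : ZMod n} (hab : a ≠ b) :
    ConflictFree (spreadCodeword e M k a) (spreadCodeword e M k b) := by
  refine fun i j => Finset.disjoint_left.mpr fun z hza hzb => hab ?_
  obtain ⟨x, y, hne, hz⟩ := exists_of_mem_Darr_spreadCodeword hza
  obtain ⟨x', y', -, hz'⟩ := exists_of_mem_Darr_spreadCodeword hzb
  obtain ⟨hfst, hsnd⟩ := Prod.mk.inj (hz.symm.trans hz')
  have hxy : (x + y' : ℕ) = x' + y := add_eq_add_of_natCast_sub_eq hm hfst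
  have hshift : (finProdFinEquiv (i, x) : ZMod n) - (finProdFinEquiv (j, y) : ZMod n) =
      (finProdFinEquiv (i, x') : ZMod n) - (finProdFinEquiv (j, y') : ZMod n) := by
    rw [sub_eq_sub_iff_add_eq_add]
    norm_cast
    simp only [finProdFinEquiv_apply_val]
    congr 1
    omega
  rw [← hshift] at hsnd
  exact (isUnit_natCast_sub_natCast hn (finProdFinEquiv.injective.ne hne)).mul_right_cancel hsnd

theorem conflictFree_spreadCodeword_channelCodeword (hm : 2 * k ≤ m + 1) (a : ZMod n) (i : Fin M)
    (S : Finset (ZMod n)) :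
    ConflictFree (spreadCodeword e M k a) (channelCodeword e i S) := by
  refine fun j j' => Finset.disjoint_left.mpr fun z hza hzS => ?_
  obtain ⟨x, y, hne, hz⟩ := exists_of_mem_Darr_spreadCodeword hza
  obtain ⟨rfl, rfl, d, -, hz'⟩ := exists_of_mem_Darr_channelCodeword hzS
  obtain ⟨hfst, -⟩ := Prod.mk.inj (hz.symm.trans hz')
  have : (x + x : ℕ) = x + y := add_eq_add_of_natCast_sub_eq hm (by rw [hfst, sub_self])
  exact hne (congrArg _ (Fin.ext (by omega)))

theorem conflictFree_channelCodeword {i j : Fin M} {S T : Finset (ZMod n)}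
    (h : i = j → Disjoint (dstar S) (dstar T)) :
    ConflictFree (channelCodeword e i S) (channelCodeword e j T) := by
  refine fun l l' => Finset.disjoint_left.mpr fun z hzS hzT => ?_
  obtain ⟨rfl, rfl, d, hd, hz⟩ := exists_of_mem_Darr_channelCodeword hzS
  obtain ⟨rfl, -, d', hd', hz'⟩ := exists_of_mem_Darr_channelCodeword hzT
  obtain ⟨-, rfl⟩ := Prod.mk.inj (hz.symm.trans hz')
  exact Finset.disjoint_left.mp (h rfl) hd hd'

theorem exists_isMCCAC_card_eq_add_mul_card [NeZero n] (e : ZMod L ≃+ ZMod m × ZMod n)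
    (hw : 1 < M * k) (hm : 2 * k ≤ m + 1) (hn : ∀ p : ℕ, p.Prime → p ∣ n → M * k ≤ p)
    {C' : Finset (Finset (ZMod n))} (hC' : IsCAC n (M * k) C') :
    ∃ C, IsMCCAC M L (M * k) C ∧ C.card = n + M * C'.card := by
  let f : ZMod n ⊕ Fin M × C' → Finset (Fin M × ZMod L) :=
    Sum.elim (spreadCodeword e M k) fun p => channelCodeword e p.1 p.2
  have hcard : ∀ a, (f a).card = M * k := by
    rintro (a | ⟨i, S⟩)
    · exact card_spreadCodeword hm a
    · exact (card_channelCodeword i S.1).trans (hC'.1 S S.2)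
  have hf : Pairwise fun a b => ConflictFree (f a) (f b) := by
    rintro (a | ⟨i, S⟩) (b | ⟨j, T⟩) hne
    · exact conflictFree_spreadCodeword hm hn (by simpa using hne)
    · exact conflictFree_spreadCodeword_channelCodeword hm a j T
    · exact (conflictFree_spreadCodeword_channelCodeword hm b i S).symm
    · refine conflictFree_channelCodeword fun hij => hC'.2 S S.2 T T.2 fun hST => hne ?_
      exact congrArg Sum.inr (Prod.ext hij (Subtype.ext hST))
  simpa [ZMod.card] using exists_isMCCAC_of_pairwise_conflictFree hw f hcard hf

end Construction

theorem stmt_10_general (M L L' w : ℕ) (hM : 2 ≤ M) (hw : 0 < w) (hdvd : M ∣ w)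
    (hL' : 0 < L') (hL : L = (2 * (w / M) - 1) * L')
    (hprime : ∀ p : ℕ, p.Prime → p ∣ L' → w ≤ p)
    (hCAC : ∃ C' : Finset (Finset (ZMod L')), IsCAC L' w C' ∧ C'.card * (2 * w - 2) = L' - 1) :
    ∃ C : Finset (Finset (Fin M × ZMod L)), IsMCCAC M L w C ∧
      (C.card : ℝ) =
        (M : ℝ) * ((M : ℝ) - 1) * (L : ℝ) / ((2 * (w : ℝ) - (M : ℝ)) * ((w : ℝ) - 1))
        + (M : ℝ) * ((L : ℝ) - 1) / (2 * (w : ℝ) - 2) := by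
  obtain ⟨C', hC', hcount⟩ := hCAC
  obtain ⟨k, rfl⟩ := hdvd
  rw [Nat.mul_div_cancel_left k (by omega)] at hL
  have hk : 1 ≤ k := Nat.pos_of_mul_pos_left hw
  have hkw : 2 * k ≤ M * k := Nat.mul_le_mul_right k hM
  have : NeZero L' := ⟨hL'.ne'⟩
  have hcop : (2 * k - 1).Coprime L' :=
    coprime_of_forall_prime_le hprime (by omega) (by omega)
  subst hL
  obtain ⟨C, hC, hcard⟩ := exists_isMCCAC_card_eq_add_mul_card
    (ZMod.chineseRemainder hcop).toAddEquiv (by omega) (by omega) hprime hC'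
  refine ⟨C, hC, ?_⟩
  have hcountR : (C'.card : ℝ) * (2 * (M * k) - 2) = L' - 1 := by
    have := congrArg (Nat.cast (R := ℝ)) hcount
    rwa [Nat.cast_mul, Nat.cast_pred hL', Nat.cast_sub (by omega), Nat.cast_mul, Nat.cast_mul,
      Nat.cast_ofNat] at this
  have hkR : (2 : ℝ) * k - 1 ≠ 0 := by
    have : (1 : ℝ) ≤ k := by exact_mod_cast hk
    linarith
  have hwR : (2 : ℝ) * (M * k) - 2 ≠ 0 := by
    have : (2 : ℝ) ≤ M * k := by exact_mod_cast (by omega : 2 ≤ M * k)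
    linarith
  rw [hcard]
  push_cast [Nat.cast_pred (R := ℝ) (show 0 < 2 * k by omega)]
  exact add_mul_eq_div_add_div (by positivity) hkR hwR hcountR

theorem stmt_10 (M L L' w : ℕ) (hM : 3 ≤ M) (hMw : M < w) (hdvd : M ∣ w)
    (hL' : 0 < L') (hL : L = (2 * (w / M) - 1) * L')
    (hprime : ∀ p : ℕ, p.Prime → p ∣ L' → 2 * w - 1 ≤ p)
    (hCAC : ∃ C' : Finset (Finset (ZMod L')),
      IsCAC L' w C' ∧ (∀ S ∈ C', IsEquiDiff w S) ∧ C'.card * (2 * w - 2) = L' - 1) :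
    ∃ C : Finset (Finset (Fin M × ZMod L)), IsMCCAC M L w C ∧
      (C.card : ℝ) =
        (M : ℝ) * ((M : ℝ) - 1) * (L : ℝ) / ((2 * (w : ℝ) - (M : ℝ)) * ((w : ℝ) - 1))
        + (M : ℝ) * ((L : ℝ) - 1) / (2 * (w : ℝ) - 2) := by
  obtain ⟨C', hC', -, hcount⟩ := hCAC
  exact stmt_10_general M L L' w (by omega) (by omega) hdvd hL' hL
    (fun p hp hpL' => by have := hprime p hp hpL'; omega) ⟨C', hC', hcount⟩
end

section
/- Let M, L, L', w be positive integers such that w > M ≥ 3, M divides w, L = (2w/M - 1)·L', and every prime factor of L' is at least 2w - 1. Then every MC-CAC of length L and weight w in M channels has at most M(M-1)·(L + (τ(2w/M - 1) - 1)·(L - L'))/((2w-M)(w-1)) + (M(L-1) + 2(w-M))/(2w-2) codewords. -/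
/-!
If `A`, `B` are nonempty finite subsets of an abelian group, Dyson's transform yields a subgroup
`H`, a coset of which lies in `A - B`, with `#A + #B ≤ #(A - B) + #H`. In a group of order
`m * n` where the primes dividing `n` are large compared with `#A + #B`, one may take `#H ∣ m`.

Let `a` be the number of channels that a codeword uses. Applied to its distinct pairs of channels,
the inequality says that the off-diagonal difference sets have at least
`m / (2 * m - 1) * (a - 1) * (2 * w - a)` elements in total. Applied to single channels, it says
that the diagonal difference sets, with their `m`-torsion elements counted twice, have at least
`2 * w - 2 * a` elements. For different codewords these sets are disjoint, and `ZMod L` has at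
most `m` elements of `m`-torsion. So the off-diagonal count bounds the sum of the `a - 1` over the
code, and the diagonal count turns this into a bound on the number of codewords.
-/

open Finset
open scoped Pointwise

section DifferenceSets

variable {G : Type*} [AddCommGroup G]

lemma le_or_dvd_of_dvd_mul {d m n r : ℕ} (hd : d ≠ 0) (hdvd : d ∣ m * n)
    (hprime : ∀ p : ℕ, p.Prime → p ∣ n → r ≤ p) : r ≤ d ∨ d ∣ m := by
  by_cases hdn : d.Coprime n
  · exact .inr (hdn.dvd_of_dvd_mul_right hdvd)
  · obtain ⟨p, hp, hpd, hpn⟩ := Nat.Prime.not_coprime_iff_dvd.1 hdn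
    exact .inl ((hprime p hp hpn).trans (Nat.le_of_dvd (Nat.pos_of_ne_zero hd) hpd))

lemma card_addSubgroup_le_of_vadd_subset {H : AddSubgroup G} {g : G} {D : Finset G}
    (h : g +ᵥ (H : Set G) ⊆ D) : Nat.card H ≤ #D := by
  have ncard_le := Set.ncard_le_ncard h D.finite_toSet
  rwa [Set.ncard_coe_finset, Set.ncard_vadd_set] at ncard_le

variable [DecidableEq G]

lemma exists_addSubgroup_subset_add_of_add_subset {A B : Finset G} (hA : 0 ∈ A) (hB : 0 ∈ B)
    (hAB : A + B ⊆ A) :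
    ∃ H : AddSubgroup G, (H : Set G) ⊆ ↑(A + B) ∧ #A + #B ≤ #(A + B) + Nat.card H := by
  set H := AddAction.stabilizer G A
  have H_subset : (H : Set G) ⊆ A := fun h hh => by
    simpa using AddAction.mem_stabilizer_finset'.1 hh hA
  have B_subset : (B : Set G) ⊆ H := fun b hb =>
    AddAction.mem_stabilizer_finset'.2 fun a ha => by
      rw [vadd_eq_add, add_comm]
      exact hAB (add_mem_add ha hb)
  have A_subset : A ⊆ A + B := subset_add_left A hB
  have card_B_le : #B ≤ Nat.card H := by
    rw [← Set.ncard_coe_finset]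
    exact Set.ncard_le_ncard B_subset (A.finite_toSet.subset H_subset)
  exact ⟨H, H_subset.trans (mod_cast A_subset), add_le_add (card_le_card A_subset) card_B_le⟩

lemma exists_addSubgroup_subset_add (A B : Finset G) (hA : 0 ∈ A) (hB : 0 ∈ B) :
    ∃ H : AddSubgroup G, (H : Set G) ⊆ ↑(A + B) ∧ #A + #B ≤ #(A + B) + Nat.card H := by
  induction hn : #B using Nat.strong_induction_on generalizing A B with
  | _ n ih =>
  subst hn
  by_cases hAB : A + B ⊆ A
  · exact exists_addSubgroup_subset_add_of_add_subset hA hB hAB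
  · obtain ⟨e, he, b, hb, heb⟩ : ∃ e ∈ A, ∃ b ∈ B, e + b ∉ A := by
      simpa [add_subset_iff] using hAB
    set T := addDysonETransform e (A, B)
    have T_snd_ssubset : T.2 ⊂ B := by
      refine Finset.ssubset_iff_subset_ne.2 ⟨inter_subset_left, fun h => heb ?_⟩
      have : b ∈ T.2 := h ▸ hb
      simpa [T, mem_neg_vadd_finset_iff] using (mem_inter.1 this).2
    have zero_mem_snd : 0 ∈ T.2 :=
      mem_inter.2 ⟨hB, mem_neg_vadd_finset_iff.2 (by simpa using he)⟩
    obtain ⟨H, H_subset, hH⟩ :=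
      ih #T.2 (card_lt_card T_snd_ssubset) T.1 T.2 (mem_union_left _ hA) zero_mem_snd rfl
    have T_subset : T.1 + T.2 ⊆ A + B := addDysonETransform.subset e (A, B)
    have T_card : #T.1 + #T.2 = #A + #B := addDysonETransform.card e (A, B)
    exact ⟨H, H_subset.trans (mod_cast T_subset), by grw [← T_card, hH, T_subset]⟩

lemma exists_addSubgroup_vadd_subset_add {A B : Finset G} {a b : G} (ha : a ∈ A) (hb : b ∈ B) :
    ∃ H : AddSubgroup G, (a + b) +ᵥ (H : Set G) ⊆ ↑(A + B) ∧
      #A + #B ≤ #(A + B) + Nat.card H := by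
  obtain ⟨H, H_subset, hH⟩ := exists_addSubgroup_subset_add (-a +ᵥ A) (-b +ᵥ B)
    (by simpa [mem_neg_vadd_finset_iff] using ha) (by simpa [mem_neg_vadd_finset_iff] using hb)
  have translate_add : (-a +ᵥ A) + (-b +ᵥ B) = -(a + b) +ᵥ (A + B) := by
    rw [vadd_add_vadd_comm, neg_add]
  rw [translate_add] at H_subset hH
  refine ⟨H, ?_, by simpa only [card_vadd_finset] using hH⟩
  rwa [coe_vadd_finset, Set.subset_vadd_set_iff, neg_neg] at H_subset

variable [Finite G] {m n r : ℕ} (hG : Nat.card G = m * n)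
  (hprime : ∀ p : ℕ, p.Prime → p ∣ n → r ≤ p)

include hG hprime

lemma exists_addSubgroup_card_dvd {A B : Finset G} {a b : G} (ha : a ∈ A) (hb : b ∈ B)
    (hAB : #A + #B ≤ r + 1) :
    ∃ H : AddSubgroup G, Nat.card H ∣ m ∧ (a - b) +ᵥ (H : Set G) ⊆ ↑(A - B) ∧
      #A + #B ≤ #(A - B) + Nat.card H := by
  obtain ⟨H, H_subset, hH⟩ := exists_addSubgroup_vadd_subset_add ha (neg_mem_neg hb)
  rw [← sub_eq_add_neg, ← sub_eq_add_neg] at H_subset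
  rw [← sub_eq_add_neg, card_neg] at hH
  rcases le_or_dvd_of_dvd_mul Nat.card_pos.ne' (hG ▸ H.card_addSubgroup_dvd_card) hprime with
    r_le | dvd_m
  · -- Then `A - B` is so large that the trivial subgroup does.
    have r_le_card : r ≤ #(A - B) := r_le.trans (card_addSubgroup_le_of_vadd_subset H_subset)
    refine ⟨⊥, by simp, ?_, ?_⟩
    · simpa [-coe_sub] using sub_mem_sub ha hb
    · simpa using hAB.trans (Nat.add_le_add_right r_le_card 1)
  · exact ⟨H, dvd_m, H_subset, hH⟩

lemma two_mul_card_le_card_sub_self {A : Finset G} (hA : A.Nonempty) (hAr : 2 * #A ≤ r + 1) :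
    2 * #A ≤ #(A - A) + #{x ∈ A - A | m • x = 0} := by
  obtain ⟨a, ha⟩ := hA
  obtain ⟨H, H_dvd, H_subset, hH⟩ :=
    exists_addSubgroup_card_dvd hG hprime ha ha ((two_mul #A).symm.trans_le hAr)
  have torsion (x) (hx : x ∈ H) : m • x = 0 :=
    addOrderOf_dvd_iff_nsmul_eq_zero.1 ((H.addOrderOf_dvd_natCard hx).trans H_dvd)
  have card_H_le : Nat.card H ≤ #{x ∈ A - A | m • x = 0} := by
    refine card_addSubgroup_le_of_vadd_subset (g := 0) fun x hx => ?_
    rw [zero_vadd] at hx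
    rw [sub_self, zero_vadd] at H_subset
    exact mem_filter.2 ⟨H_subset hx, torsion x hx⟩
  omega

lemma mul_card_add_card_sub_one_le {A B : Finset G} (hA : A.Nonempty) (hB : B.Nonempty)
    (hAB : #A + #B ≤ r + 1) :
    (m : ℝ) * (#A + #B - 1) ≤ (2 * m - 1) * #(A - B) := by
  obtain ⟨a, ha⟩ := hA
  obtain ⟨b, hb⟩ := hB
  obtain ⟨H, H_dvd, H_subset, hH⟩ := exists_addSubgroup_card_dvd hG hprime ha hb hAB
  have m_pos : 0 < m := Nat.pos_of_mul_pos_right (hG ▸ Nat.card_pos)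
  have one_le_m : (1 : ℝ) ≤ m := mod_cast m_pos
  have card_H_le_m : (Nat.card H : ℝ) ≤ m := mod_cast Nat.le_of_dvd m_pos H_dvd
  have card_H_le : (Nat.card H : ℝ) ≤ #(A - B) :=
    mod_cast card_addSubgroup_le_of_vadd_subset H_subset
  have hH' : (#A + #B : ℝ) ≤ #(A - B) + Nat.card H := mod_cast hH
  calc (m : ℝ) * (#A + #B - 1)
      ≤ m * (#(A - B) + Nat.card H - 1) := by gcongr
    _ = m * #(A - B) + (m - 1) * Nat.card H + (Nat.card H - m) := by ring
    _ ≤ m * #(A - B) + (m - 1) * #(A - B) + 0 := by gcongr; linarith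
    _ = (2 * m - 1) * #(A - B) := by ring

end DifferenceSets

lemma sum_card_inter_le_card_of_pairwiseDisjoint {ι α : Type*} [DecidableEq α] {s : Finset ι}
    {f : ι → Finset α} (hf : (s : Set ι).PairwiseDisjoint f) (t : Finset α) :
    ∑ i ∈ s, #(f i ∩ t) ≤ #t := by
  rw [← card_biUnion (hf.mono fun _ => inter_subset_left)]
  exact card_le_card (biUnion_subset.2 fun _ _ => inter_subset_right)

lemma sum_offDiag_add {ι R : Type*} [CommRing R] (s : Finset ι) (f : ι → R) :
    ∑ p ∈ s.offDiag, (f p.1 + f p.2) = 2 * (#s - 1) * ∑ i ∈ s, f i := by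
  classical
  have split : ∑ p ∈ s ×ˢ s, (f p.1 + f p.2) =
      ∑ i ∈ s, (f i + f i) + ∑ p ∈ s.offDiag, (f p.1 + f p.2) := by
    rw [← diag_union_offDiag, sum_union (disjoint_diag_offDiag s), sum_diag]
  have total : ∑ p ∈ s ×ˢ s, (f p.1 + f p.2) = 2 * #s * ∑ i ∈ s, f i := by
    simp only [sum_product, sum_add_distrib, sum_const, nsmul_eq_mul, ← mul_sum]
    ring
  rw [total, sum_add_distrib] at split
  linear_combination -split

lemma cast_card_offDiag {ι R : Type*} [Ring R] (s : Finset ι) :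
    (#s.offDiag : R) = #s * (#s - 1) := by
  rw [offDiag_card, Nat.cast_sub (Nat.le_mul_self _), Nat.cast_mul, mul_sub, mul_one]

section Codeword

variable {M L : ℕ} (S : Finset (Fin M × ZMod L))

lemma Darr_self (i : Fin M) : Darr S i i = (chan S i - chan S i).erase 0 := by
  rw [Darr, if_pos rfl, image_sub_product]

lemma Darr_of_ne {i j : Fin M} (hij : i ≠ j) : Darr S i j = chan S i - chan S j := by
  rw [Darr, if_neg hij, image_sub_product]

lemma card_chan (i : Fin M) : #(chan S i) = #{p ∈ S | p.1 = i} :=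
  card_image_of_injOn fun p hp q hq hpq => by
    simp only [coe_filter, Set.mem_ofPred_eq] at hp hq
    exact Prod.ext (hp.2.trans hq.2.symm) hpq

lemma card_chan_le (i : Fin M) : #(chan S i) ≤ #S :=
  (card_chan S i).trans_le (card_filter_le _ _)

/-- The channels in which the codeword `S` has at least one time slot. -/
def activeChannels : Finset (Fin M) :=
  {i | (chan S i).Nonempty}

lemma sum_activeChannels_card_chan : ∑ i ∈ activeChannels S, #(chan S i) = #S := by
  calc ∑ i ∈ activeChannels S, #(chan S i)
      = ∑ i, #(chan S i) := sum_filter_of_ne fun i _ hi => card_ne_zero.1 hi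
    _ = ∑ i, #{p ∈ S | p.1 = i} := by simp only [card_chan]
    _ = #S := (card_eq_sum_card_fiberwise (by simp)).symm

lemma card_activeChannels_le : #(activeChannels S) ≤ M :=
  (card_le_univ _).trans_eq (Fintype.card_fin M)

variable {S} in
lemma activeChannels_nonempty (hS : S.Nonempty) : (activeChannels S).Nonempty := by
  by_contra h
  have card_eq := sum_activeChannels_card_chan S
  rw [not_nonempty_iff_eq_empty.1 h, sum_empty] at card_eq
  exact hS.card_ne_zero card_eq.symm

variable [NeZero L] {m n : ℕ} (hL : L = m * n)
  (hprime : ∀ p : ℕ, p.Prime → p ∣ n → 2 * #S - 1 ≤ p)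

include hL hprime

lemma two_mul_card_chan_le_card_Darr_self {i : Fin M} (hi : (chan S i).Nonempty) :
    2 * #(chan S i) ≤ #(Darr S i i) + #{x ∈ Darr S i i | m • x = 0} + 2 := by
  have chan_le := card_chan_le S i
  have key := two_mul_card_le_card_sub_self ((Nat.card_zmod L).trans hL) hprime hi (by omega)
  have zero_mem : (0 : ZMod L) ∈ chan S i - chan S i := hi.zero_mem_sub
  have card_Darr : #(Darr S i i) + 1 = #(chan S i - chan S i) := by
    rw [Darr_self, card_erase_add_one zero_mem]
  have card_torsion :
      #{x ∈ Darr S i i | m • x = 0} + 1 = #{x ∈ chan S i - chan S i | m • x = 0} := by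
    rw [Darr_self, filter_erase, card_erase_add_one (by simp [zero_mem])]
  omega

lemma mul_card_chan_add_card_chan_le {i j : Fin M} (hi : (chan S i).Nonempty)
    (hj : (chan S j).Nonempty) (hij : i ≠ j) :
    (m : ℝ) * (#(chan S i) + #(chan S j) - 1) ≤ (2 * m - 1) * #(Darr S i j) := by
  have chan_i_le := card_chan_le S i
  have chan_j_le := card_chan_le S j
  rw [Darr_of_ne S hij]
  exact mul_card_add_card_sub_one_le ((Nat.card_zmod L).trans hL) hprime hi hj (by omega)

lemma two_mul_card_le_sum_card_Darr_self :
    2 * #S ≤ ∑ i, (#(Darr S i i) + #{x ∈ Darr S i i | m • x = 0}) + 2 * #(activeChannels S) := by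
  calc 2 * #S
      = ∑ i ∈ activeChannels S, 2 * #(chan S i) := by
        rw [← mul_sum, sum_activeChannels_card_chan]
    _ ≤ ∑ i ∈ activeChannels S, (#(Darr S i i) + #{x ∈ Darr S i i | m • x = 0} + 2) :=
        sum_le_sum fun i hi =>
          two_mul_card_chan_le_card_Darr_self S hL hprime (mem_filter.1 hi).2
    _ = ∑ i ∈ activeChannels S, (#(Darr S i i) + #{x ∈ Darr S i i | m • x = 0})
          + 2 * #(activeChannels S) := by
        rw [sum_add_distrib, sum_const, smul_eq_mul, mul_comm]
    _ ≤ _ := by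
        gcongr
        exact subset_univ _

lemma mul_card_activeChannels_le_sum_card_Darr :
    (m : ℝ) * ((#(activeChannels S) - 1) * (2 * #S - #(activeChannels S))) ≤
      (2 * m - 1) * ∑ p ∈ univ.offDiag, (#(Darr S p.1 p.2) : ℝ) := by
  have one_le_m : (1 : ℝ) ≤ m := by
    exact_mod_cast Nat.one_le_iff_ne_zero.2 (left_ne_zero_of_mul (hL ▸ NeZero.ne L))
  have sum_card_chan : ∑ i ∈ activeChannels S, (#(chan S i) : ℝ) = #S :=
    mod_cast sum_activeChannels_card_chan S
  calc (m : ℝ) * ((#(activeChannels S) - 1) * (2 * #S - #(activeChannels S)))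
      = m * ∑ p ∈ (activeChannels S).offDiag, ((#(chan S p.1) + #(chan S p.2) : ℝ) - 1) := by
        rw [sum_sub_distrib, sum_offDiag_add (activeChannels S) fun i => (#(chan S i) : ℝ),
          sum_card_chan, sum_const, nsmul_one, cast_card_offDiag]
        ring
    _ = ∑ p ∈ (activeChannels S).offDiag, m * ((#(chan S p.1) + #(chan S p.2) : ℝ) - 1) :=
        mul_sum _ _ _
    _ ≤ ∑ p ∈ (activeChannels S).offDiag, (2 * m - 1) * (#(Darr S p.1 p.2) : ℝ) := by
        refine sum_le_sum fun p hp => ?_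
        obtain ⟨hi, hj, hij⟩ := mem_offDiag.1 hp
        exact mul_card_chan_add_card_chan_le S hL hprime (mem_filter.1 hi).2 (mem_filter.1 hj).2 hij
    _ = (2 * m - 1) * ∑ p ∈ (activeChannels S).offDiag, (#(Darr S p.1 p.2) : ℝ) :=
        (mul_sum _ _ _).symm
    _ ≤ (2 * m - 1) * ∑ p ∈ univ.offDiag, (#(Darr S p.1 p.2) : ℝ) := by
        gcongr
        · linarith
        · exact subset_univ (activeChannels S)

lemma mul_card_activeChannels_sub_one_le_sum_card_Darr (hS : S.Nonempty) :
    (m : ℝ) * ((2 * #S - M) * (#(activeChannels S) - 1)) ≤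
      (2 * m - 1) * ∑ p ∈ univ.offDiag, (#(Darr S p.1 p.2) : ℝ) := by
  have one_le_active : (1 : ℝ) ≤ #(activeChannels S) :=
    mod_cast (activeChannels_nonempty hS).card_pos
  have active_le : (#(activeChannels S) : ℝ) ≤ M := mod_cast card_activeChannels_le S
  calc (m : ℝ) * ((2 * #S - M) * (#(activeChannels S) - 1))
      ≤ m * ((2 * #S - #(activeChannels S)) * (#(activeChannels S) - 1)) := by
        gcongr
    _ ≤ _ := by
        rw [mul_comm (_ - _)]
        exact mul_card_activeChannels_le_sum_card_Darr S hL hprime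

end Codeword

lemma card_nonzero_torsion_zmod_le {L m : ℕ} [NeZero L] (hm : 0 < m) :
    #{x : ZMod L | x ≠ 0 ∧ m • x = 0} ≤ m - 1 := by
  rw [← filter_filter, filter_ne' univ (0 : ZMod L), filter_erase,
    card_erase_of_mem (by simp)]
  exact Nat.sub_le_sub_right (IsAddCyclic.card_nsmul_eq_zero_le hm) 1

namespace IsMCCAC

variable {M L w : ℕ} {C : Finset (Finset (Fin M × ZMod L))} (hC : IsMCCAC M L w C)

include hC

lemma sum_card_Darr_inter_le (i j : Fin M) (t : Finset (ZMod L)) :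
    ∑ S ∈ C, #(Darr S i j ∩ t) ≤ #t :=
  sum_card_inter_le_card_of_pairwiseDisjoint
    (fun S hS S' hS' hne => hC.2 S hS S' hS' hne i j) t

variable [NeZero L]

lemma sum_card_Darr_le (i j : Fin M) : ∑ S ∈ C, #(Darr S i j) ≤ L := by
  simpa using hC.sum_card_Darr_inter_le i j univ

lemma sum_sum_offDiag_card_Darr_le :
    ∑ S ∈ C, ∑ p ∈ univ.offDiag, (#(Darr S p.1 p.2) : ℝ) ≤ M * (M - 1) * L := by
  calc ∑ S ∈ C, ∑ p ∈ univ.offDiag, (#(Darr S p.1 p.2) : ℝ)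
      = ∑ p ∈ univ.offDiag, ∑ S ∈ C, (#(Darr S p.1 p.2) : ℝ) := sum_comm
    _ ≤ ∑ _p ∈ (univ : Finset (Fin M)).offDiag, (L : ℝ) :=
        sum_le_sum fun p _ => mod_cast hC.sum_card_Darr_le p.1 p.2
    _ = M * (M - 1) * L := by
        rw [sum_const, nsmul_eq_mul, cast_card_offDiag, card_univ, Fintype.card_fin]

lemma sum_card_Darr_self_filter_le (i : Fin M) (P : ZMod L → Prop) [DecidablePred P] :
    ∑ S ∈ C, #{x ∈ Darr S i i | P x} ≤ #{x : ZMod L | x ≠ 0 ∧ P x} := by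
  refine le_trans (sum_le_sum fun S _ => card_le_card fun x hx => ?_)
    (hC.sum_card_Darr_inter_le i i {x | x ≠ 0 ∧ P x})
  obtain ⟨hxD, hxP⟩ := mem_filter.1 hx
  have hx0 : x ≠ 0 := ne_of_mem_erase (Darr_self S i ▸ hxD)
  exact mem_inter.2 ⟨hxD, mem_filter.2 ⟨mem_univ x, hx0, hxP⟩⟩

lemma sum_card_Darr_self_le (i : Fin M) : ∑ S ∈ C, #(Darr S i i) ≤ L - 1 := by
  simpa [filter_ne', card_erase_of_mem, ZMod.card] using
    hC.sum_card_Darr_self_filter_le i fun _ => True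

variable {m n : ℕ} (hL : L = m * n) (hprime : ∀ p : ℕ, p.Prime → p ∣ n → 2 * w - 1 ≤ p)

include hL hprime

lemma two_mul_mul_card_le :
    2 * w * #C ≤ M * (L - 1 + (m - 1)) + 2 * ∑ S ∈ C, #(activeChannels S) := by
  have m_pos : 0 < m := Nat.pos_of_ne_zero (left_ne_zero_of_mul (hL ▸ NeZero.ne L))
  calc 2 * w * #C
      = ∑ S ∈ C, 2 * #S := by
        rw [sum_congr rfl fun S hS => congrArg (2 * ·) (hC.1 S hS), sum_const, smul_eq_mul,
          mul_comm]
    _ ≤ ∑ S ∈ C, (∑ i, (#(Darr S i i) + #{x ∈ Darr S i i | m • x = 0})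
          + 2 * #(activeChannels S)) :=
        sum_le_sum fun S hS => two_mul_card_le_sum_card_Darr_self S hL (by rwa [hC.1 S hS])
    _ = ∑ i, (∑ S ∈ C, #(Darr S i i) + ∑ S ∈ C, #{x ∈ Darr S i i | m • x = 0})
          + 2 * ∑ S ∈ C, #(activeChannels S) := by
        simp only [sum_add_distrib, mul_sum, sum_comm (s := C)]
    _ ≤ ∑ _i : Fin M, (L - 1 + (m - 1)) + 2 * ∑ S ∈ C, #(activeChannels S) := by
        gcongr with i
        · exact hC.sum_card_Darr_self_le i
        · exact (hC.sum_card_Darr_self_filter_le i _).trans (card_nonzero_torsion_zmod_le m_pos)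
    _ = M * (L - 1 + (m - 1)) + 2 * ∑ S ∈ C, #(activeChannels S) := by simp

lemma mul_sum_card_activeChannels_sub_one_le (hw : 0 < w) :
    (2 * w - M : ℝ) * ∑ S ∈ C, (#(activeChannels S) - 1 : ℝ) ≤ M * (M - 1) * (2 * L - n) := by
  have m_pos : (0 : ℝ) < m :=
    mod_cast Nat.pos_of_ne_zero (left_ne_zero_of_mul (hL ▸ NeZero.ne L))
  have one_le_m : (1 : ℝ) ≤ m := mod_cast m_pos
  refine le_of_mul_le_mul_left ?_ m_pos
  calc (m : ℝ) * ((2 * w - M) * ∑ S ∈ C, (#(activeChannels S) - 1 : ℝ))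
      = ∑ S ∈ C, m * ((2 * w - M : ℝ) * (#(activeChannels S) - 1)) := by
        rw [mul_sum, mul_sum]
    _ ≤ ∑ S ∈ C, (2 * m - 1) * ∑ p ∈ univ.offDiag, (#(Darr S p.1 p.2) : ℝ) :=
        sum_le_sum fun S hS => by
          have card_S : #S = w := hC.1 S hS
          simpa only [card_S] using mul_card_activeChannels_sub_one_le_sum_card_Darr S hL
            (by rwa [card_S]) (card_pos.1 (hw.trans_eq card_S.symm))
    _ ≤ (2 * m - 1) * (M * (M - 1) * L) := by
        rw [← mul_sum]
        gcongr
        · linarith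
        · exact hC.sum_sum_offDiag_card_Darr_le
    _ = m * (M * (M - 1) * (2 * L - n)) := by
        rw [hL, Nat.cast_mul]
        ring

end IsMCCAC

theorem stmt_11_general (M L m n w : ℕ) (hw : 1 < w) (hMw : M < 2 * w) (hm : 0 < m) (hn : 0 < n)
    (hL : L = m * n) (hprime : ∀ p : ℕ, p.Prime → p ∣ n → 2 * w - 1 ≤ p)
    (C : Finset (Finset (Fin M × ZMod L))) (hC : IsMCCAC M L w C) :
    (#C : ℝ) ≤ M * (M - 1) * (2 * L - n) / ((2 * w - M) * (w - 1))
      + (M * (L - 1) + M * (m - 1)) / (2 * w - 2) := by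
  have L_pos : 0 < L := hL ▸ Nat.mul_pos hm hn
  have : NeZero L := ⟨L_pos.ne'⟩
  have w_sub_one_pos : (0 : ℝ) < w - 1 := sub_pos.2 (mod_cast hw)
  have two_mul_w_sub_M_pos : (0 : ℝ) < 2 * w - M := sub_pos.2 (mod_cast hMw)
  set T := ∑ S ∈ C, (#(activeChannels S) - 1 : ℝ) with hT
  have diagonal : 2 * (w : ℝ) * #C ≤ M * (L - 1 + (m - 1)) + 2 * (T + #C) := by
    have h := (Nat.cast_le (α := ℝ)).2 (hC.two_mul_mul_card_le hL hprime)
    push_cast [Nat.cast_sub hm, Nat.cast_sub L_pos] at h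
    simpa [hT] using h
  have off_diagonal : T ≤ M * (M - 1) * (2 * L - n) / (2 * w - M) :=
    (le_div_iff₀' two_mul_w_sub_M_pos).2
      (hC.mul_sum_card_activeChannels_sub_one_le hL hprime (by omega))
  calc (#C : ℝ) ≤ T / (w - 1) + (M * (L - 1) + M * (m - 1)) / (2 * w - 2) := by
        rw [show (2 * w - 2 : ℝ) = 2 * (w - 1) by ring, ← mul_div_mul_left T _ two_ne_zero,
          ← add_div, le_div_iff₀ (by positivity)]
        linarith
    _ ≤ _ := by
        rw [← div_div]
        gcongr

lemma two_mul_sub_le_add_card_divisors_mul {m : ℕ} (hm : 1 < m) {a b : ℝ} (hab : b ≤ a) :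
    2 * a - b ≤ a + (#m.divisors - 1) * (a - b) := by
  have two_le : (2 : ℝ) ≤ #m.divisors := by
    exact_mod_cast one_lt_card.2 ⟨1, Nat.one_mem_divisors.2 (by omega), m,
      Nat.mem_divisors_self m (by omega), hm.ne⟩
  linarith [mul_nonneg (sub_nonneg.2 two_le) (sub_nonneg.2 hab)]

lemma one_lt_two_mul_div_sub_one {M w : ℕ} (hMw : M < w) (hdvd : M ∣ w) :
    1 < 2 * (w / M) - 1 := by
  have M_ne_zero : M ≠ 0 := by
    rintro rfl
    exact hMw.ne' (zero_dvd_iff.1 hdvd)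
  have one_lt_div : 1 < w / M := (Nat.lt_div_iff_mul_lt_of_dvd M_ne_zero hdvd).2 (by simpa)
  omega

lemma mul_two_mul_div_sub_one_sub_one {M w : ℕ} (hMw : M < w) (hdvd : M ∣ w) :
    (M : ℝ) * (((2 * (w / M) - 1 : ℕ) : ℝ) - 1) = 2 * (w - M) := by
  have M_mul_div : (M : ℝ) * (w / M : ℕ) = w := mod_cast Nat.mul_div_cancel' hdvd
  rw [Nat.cast_pred (by have := one_lt_two_mul_div_sub_one hMw hdvd; omega)]
  push_cast
  linear_combination 2 * M_mul_div

theorem stmt_11 (M L L' w : ℕ) (hM : 3 ≤ M) (hMw : M < w) (hdvd : M ∣ w)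
    (hL' : 0 < L') (hL : L = (2 * (w / M) - 1) * L')
    (hprime : ∀ p : ℕ, p.Prime → p ∣ L' → 2 * w - 1 ≤ p)
    (C : Finset (Finset (Fin M × ZMod L))) (hC : IsMCCAC M L w C) :
    (C.card : ℝ) ≤
      (M : ℝ) * ((M : ℝ) - 1) *
          ((L : ℝ) + (((2 * (w / M) - 1 : ℕ).divisors.card : ℝ) - 1) * ((L : ℝ) - (L' : ℝ)))
          / ((2 * (w : ℝ) - (M : ℝ)) * ((w : ℝ) - 1))
      + ((M : ℝ) * ((L : ℝ) - 1) + 2 * ((w : ℝ) - (M : ℝ))) / (2 * (w : ℝ) - 2) := by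
  have hm := one_lt_two_mul_div_sub_one hMw hdvd
  have hL'L : (L' : ℝ) ≤ L := mod_cast hL ▸ Nat.le_mul_of_pos_left L' (by omega)
  have hM' : (3 : ℝ) ≤ M := mod_cast hM
  have hMw' : (M : ℝ) < w := mod_cast hMw
  grw [stmt_11_general M L (2 * (w / M) - 1) L' w (by omega) (by omega) (by omega) hL' hL hprime
    C hC, mul_two_mul_div_sub_one_sub_one hMw hdvd, two_mul_sub_le_add_card_divisors_mul hm hL'L]
  all_goals exact mul_nonneg (by linarith) (by linarith)
end

section
/- Let A and B be nonempty subsets of Z_L with |A - B| ≤ |A| + |B| - 2. Then the stabilizer H(A - B) satisfies 2 ≤ |H(A - B)| ≤ |A| + |B| - 2. -/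
/-- The difference set `A - B = {a - b : a ∈ A, b ∈ B}` in `Z_L`. -/
def fdiff {L : ℕ} (A B : Finset (ZMod L)) : Finset (ZMod L) :=
  (A ×ˢ B).image fun p => p.1 - p.2

/-- The stabilizer `H(T) = {h ∈ Z_L : h + T = T}` of a subset `T ⊆ Z_L`. -/
def stab {L : ℕ} [NeZero L] (T : Finset (ZMod L)) : Finset (ZMod L) :=
  Finset.univ.filter fun h => T.image (fun t => h + t) = T

/-!
This is Kneser's theorem, `|A| + |B| ≤ |A + B| + |H(A + B)|`, applied to `A` and `-B`; the upper
bound holds because a nonempty set is a union of cosets of its stabilizer.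

To prove Kneser's theorem, call a finite set `C` *large* if `|A| + |B| ≤ |C| + |H(C)|`. Dyson
e-transforms fixing `a ∈ A` and `b ∈ B` shrink `B` until `B - b` stabilizes `A`; the translate
`b + A` is then a large subset of the original `A + B` containing `a + b`. So `A + B` is covered by
large subsets, and it remains to see that the union of two large sets `C` and `D` is large. For this
one compares, at a point of `D \ C`, how the cosets of `H(C)` and `H(D)` through it meet the two
sets.
-/

open AddAction Finset
open scoped Pointwise

lemma add_le_or_add_le_of_mul_le_mul {h x x' y y' d d' : ℕ} (hh : 0 < h) (hx : h ≤ x) (hy : h ≤ y)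
    (hx' : x' = 0 ∨ h ≤ x') (hy' : y' = 0 ∨ h ≤ y') (hle : x + x' ≤ y + y')
    (hd : x * y ≤ h * d) (hd' : x' * y' ≤ h * d') : x + x' ≤ d + h ∨ y + y' ≤ d' + h := by
  by_contra! ⟨hlt, hlt'⟩
  rcases hx' with rfl | hx'
  · nlinarith
  rcases hy' with rfl | hy'
  · nlinarith
  -- `0 ≤ (x - h) * (y - h)` and `0 ≤ (x' - h) * (y' - h)`, expanded without subtraction.
  have hxy : h * (x + y) ≤ x * y + h * h := by nlinarith
  have hxy' : h * (x' + y') ≤ x' * y' + h * h := by nlinarith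
  have hyx' : y < x' := by nlinarith
  have hx'y : x' < y := by nlinarith
  exact hyx'.asymm hx'y

section AddGroup
variable {G : Type*} [AddGroup G]

section Action
variable {α : Type*} [AddAction G α] [DecidableEq α] {H : AddSubgroup G} {s t : Finset α}

lemma le_stabilizer_inter (hs : H ≤ stabilizer G s) (ht : H ≤ stabilizer G t) :
    H ≤ stabilizer G (s ∩ t) := fun h hh ↦ by
  rw [mem_stabilizer_iff, vadd_finset_inter, hs hh, ht hh]

lemma le_stabilizer_union (hs : H ≤ stabilizer G s) (ht : H ≤ stabilizer G t) :
    H ≤ stabilizer G (s ∪ t) := fun h hh ↦ by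
  rw [mem_stabilizer_iff, vadd_finset_union, hs hh, ht hh]

lemma le_stabilizer_sdiff (hs : H ≤ stabilizer G s) (ht : H ≤ stabilizer G t) :
    H ≤ stabilizer G (s \ t) := fun h hh ↦ by
  rw [mem_stabilizer_iff, vadd_finset_sdiff, hs hh, ht hh]

end Action

variable [DecidableEq G] {H : AddSubgroup G} {s : Finset G}

lemma card_le_card_of_le_stabilizer (hs : s.Nonempty) (hH : H ≤ stabilizer G s) :
    Nat.card H ≤ #s := by
  obtain ⟨t, ht⟩ := hs
  rw [← Nat.card_eq_finsetCard s]
  refine Nat.card_le_card_of_injective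
    (fun h : H ↦ (⟨h + t, (mem_stabilizer_finset.1 (hH h.2) t).2 ht⟩ : s)) fun g h hgh ↦ ?_
  exact Subtype.ext (add_right_cancel (congrArg Subtype.val hgh))

lemma card_eq_zero_or_card_le_of_le_stabilizer (hH : H ≤ stabilizer G s) :
    #s = 0 ∨ Nat.card H ≤ #s := by
  rw [card_eq_zero]
  exact s.eq_empty_or_nonempty.imp_right fun hs ↦ card_le_card_of_le_stabilizer hs hH

lemma finite_stabilizer_of_nonempty (hs : s.Nonempty) : Finite (stabilizer G s) := by
  rw [← stabilizer_coe_finset]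
  exact stabilizer_finite hs s.finite_toSet

end AddGroup

section AddCommGroup
variable {G : Type*} [AddCommGroup G] [DecidableEq G]

lemma card_mul_card_le_card_inf_mul_card_add {H K : AddSubgroup G} [Finite H] {X Y : Finset G}
    (hX : (X : Set G) ⊆ H) (hY : (Y : Set G) ⊆ K) :
    #X * #Y ≤ Nat.card (H ⊓ K : AddSubgroup G) * #(X + Y) := by
  have : Finite (H ⊓ K : AddSubgroup G) :=
    Finite.of_injective _ (AddSubgroup.inclusion_injective inf_le_left)
  rw [← card_product, ← image_add_product]
  refine card_le_mul_card_image _ _ fun z hz ↦ ?_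
  obtain ⟨⟨x₀, y₀⟩, h₀, rfl⟩ := mem_image.1 hz
  obtain ⟨hx₀, hy₀⟩ := mem_product.1 h₀
  -- Two representations `x + y = x₀ + y₀` differ by `x - x₀ = y₀ - y ∈ H ⊓ K`.
  have sub_mem : ∀ p ∈ (X ×ˢ Y).filter (fun p ↦ p.1 + p.2 = x₀ + y₀), p.1 - x₀ ∈ H ⊓ K := by
    rintro ⟨x, y⟩ hp
    obtain ⟨hxy, hsum⟩ := mem_filter.1 hp
    obtain ⟨hx, hy⟩ := mem_product.1 hxy
    have hdiff : x - x₀ = y₀ - y := by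
      rw [sub_eq_sub_iff_add_eq_add, add_comm y₀]; exact hsum
    exact ⟨H.sub_mem (hX hx) (hX hx₀), hdiff ▸ K.sub_mem (hY hy₀) (hY hy)⟩
  rw [← Nat.card_eq_finsetCard]
  refine Nat.card_le_card_of_injective (fun p ↦ ⟨p.1.1 - x₀, sub_mem p.1 p.2⟩) ?_
  rintro ⟨⟨x, y⟩, hp⟩ ⟨⟨x', y'⟩, hp'⟩ h
  obtain rfl : x = x' := sub_left_injective (congrArg Subtype.val h)
  obtain rfl : y = y' :=
    add_left_cancel ((mem_filter.1 hp).2.trans (mem_filter.1 hp').2.symm)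
  rfl

lemma inter_add_sdiff_subset_sdiff {C D P Q : Finset G} (hP : (P : Set G) ⊆ stabilizer G C)
    (hQ : (Q : Set G) ⊆ stabilizer G D) : P ∩ D + Q \ C ⊆ D \ C := by
  intro z hz
  obtain ⟨x, hx, y, hy, rfl⟩ := mem_add.1 hz
  obtain ⟨hxP, hxD⟩ := mem_inter.1 hx
  obtain ⟨hyQ, hyC⟩ := mem_sdiff.1 hy
  refine mem_sdiff.2 ⟨?_, fun hxy ↦ hyC ((mem_stabilizer_finset.1 (hP hxP) y).1 hxy)⟩
  rw [add_comm]
  exact (mem_stabilizer_finset.1 (hQ hyQ) x).2 hxD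

lemma card_le_card_sdiff_add_card_inf_of_zero_mem {H K : AddSubgroup G} [Finite H] [Finite K]
    {C D : Finset G} (hC : H ≤ stabilizer G C) (hD : K ≤ stabilizer G D) (h₀D : 0 ∈ D)
    (h₀C : 0 ∉ C) (hHK : Nat.card H ≤ Nat.card K) :
    Nat.card H ≤ #(D \ C) + Nat.card (H ⊓ K : AddSubgroup G) ∨
      Nat.card K ≤ #(C \ D) + Nat.card (H ⊓ K : AddSubgroup G) := by
  have : Finite (H ⊓ K : AddSubgroup G) :=
    Finite.of_injective _ (AddSubgroup.inclusion_injective inf_le_left)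
  obtain ⟨P, hP⟩ := (Set.toFinite (H : Set G)).exists_finset_coe
  obtain ⟨Q, hQ⟩ := (Set.toFinite (K : Set G)).exists_finset_coe
  have card_P : #(P ∩ D) + #(P \ D) = Nat.card H := by
    rw [card_inter_add_card_sdiff, ← Set.ncard_coe_finset, hP]; rfl
  have card_Q : #(Q \ C) + #(Q ∩ C) = Nat.card K := by
    rw [card_sdiff_add_card_inter, ← Set.ncard_coe_finset, hQ]; rfl
  have hP_stab : H ⊓ K ≤ stabilizer G P := by
    rw [← stabilizer_coe_finset, hP, stabilizer_addSubgroup]; exact inf_le_left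
  have hQ_stab : H ⊓ K ≤ stabilizer G Q := by
    rw [← stabilizer_coe_finset, hQ, stabilizer_addSubgroup]; exact inf_le_right
  have hC_stab : H ⊓ K ≤ stabilizer G C := inf_le_left.trans hC
  have hD_stab : H ⊓ K ≤ stabilizer G D := inf_le_right.trans hD
  have zero_mem_P : 0 ∈ P ∩ D := mem_inter.2 ⟨mem_coe.1 (hP ▸ H.zero_mem), h₀D⟩
  have zero_mem_Q : 0 ∈ Q \ C := mem_sdiff.2 ⟨mem_coe.1 (hQ ▸ K.zero_mem), h₀C⟩
  have hPC : (P : Set G) ⊆ stabilizer G C := hP.trans_subset hC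
  have hQD : (Q : Set G) ⊆ stabilizer G D := hQ.trans_subset hD
  have mul_le_D_sdiff : #(P ∩ D) * #(Q \ C) ≤ Nat.card (H ⊓ K : AddSubgroup G) * #(D \ C) := by
    grw [← inter_add_sdiff_subset_sdiff hPC hQD]
    exact card_mul_card_le_card_inf_mul_card_add
      (hP ▸ coe_subset.2 inter_subset_left) (hQ ▸ coe_subset.2 sdiff_subset)
  have mul_le_C_sdiff : #(P \ D) * #(Q ∩ C) ≤ Nat.card (H ⊓ K : AddSubgroup G) * #(C \ D) := by
    grw [← inter_add_sdiff_subset_sdiff hQD hPC, add_comm (Q ∩ C)]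
    exact card_mul_card_le_card_inf_mul_card_add
      (hP ▸ coe_subset.2 sdiff_subset) (hQ ▸ coe_subset.2 inter_subset_left)
  rw [← card_P, ← card_Q] at hHK ⊢
  exact add_le_or_add_le_of_mul_le_mul Nat.card_pos
    (card_le_card_of_le_stabilizer ⟨0, zero_mem_P⟩ (le_stabilizer_inter hP_stab hD_stab))
    (card_le_card_of_le_stabilizer ⟨0, zero_mem_Q⟩ (le_stabilizer_sdiff hQ_stab hC_stab))
    (card_eq_zero_or_card_le_of_le_stabilizer (le_stabilizer_sdiff hP_stab hD_stab))
    (card_eq_zero_or_card_le_of_le_stabilizer (le_stabilizer_inter hQ_stab hC_stab))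
    hHK mul_le_D_sdiff mul_le_C_sdiff

lemma card_le_card_sdiff_add_card_inf {H K : AddSubgroup G} [Finite H] [Finite K]
    {C D : Finset G} (hC : H ≤ stabilizer G C) (hD : K ≤ stabilizer G D) (hDC : ¬ D ⊆ C)
    (hHK : Nat.card H ≤ Nat.card K) :
    Nat.card H ≤ #(D \ C) + Nat.card (H ⊓ K : AddSubgroup G) ∨
      Nat.card K ≤ #(C \ D) + Nat.card (H ⊓ K : AddSubgroup G) := by
  obtain ⟨c, hcD, hcC⟩ := not_subset.1 hDC
  have key := card_le_card_sdiff_add_card_inf_of_zero_mem (C := -c +ᵥ C) (D := -c +ᵥ D)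
    (hC.trans_eq (stabilizer_vadd_eq_right _ _).symm)
    (hD.trans_eq (stabilizer_vadd_eq_right _ _).symm)
    (by simpa [mem_neg_vadd_finset_iff] using hcD) (by simpa [mem_neg_vadd_finset_iff] using hcC)
    hHK
  simpa only [← vadd_finset_sdiff, card_vadd_finset] using key

lemma min_card_add_card_stabilizer_le_union (C D : Finset G) :
    min (#C + Nat.card (stabilizer G C)) (#D + Nat.card (stabilizer G D)) ≤
      #(C ∪ D) + Nat.card (stabilizer G (C ∪ D)) := by
  by_cases hCD : C ⊆ D
  · rw [union_eq_right.2 hCD]; exact min_le_right _ _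
  by_cases hDC : D ⊆ C
  · rw [union_eq_left.2 hDC]; exact min_le_left _ _
  wlog hle : Nat.card (stabilizer G C) ≤ Nat.card (stabilizer G D) generalizing C D
  · rw [min_comm, union_comm]
    exact this D C hDC hCD (le_of_not_ge hle)
  have hC : C.Nonempty := nonempty_iff_ne_empty.2 fun h ↦ hCD (h ▸ empty_subset D)
  have hD : D.Nonempty := nonempty_iff_ne_empty.2 fun h ↦ hDC (h ▸ empty_subset C)
  have := finite_stabilizer_of_nonempty hC
  have := finite_stabilizer_of_nonempty hD
  have := finite_stabilizer_of_nonempty (hC.mono (subset_union_left (s₂ := D)))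
  have card_inf : Nat.card (stabilizer G C ⊓ stabilizer G D : AddSubgroup G) ≤
      Nat.card (stabilizer G (C ∪ D)) :=
    AddSubgroup.card_le_of_le (le_stabilizer_union inf_le_left inf_le_right)
  have card_D_sdiff : #(D \ C) + #C = #(C ∪ D) := by rw [card_sdiff_add_card, union_comm]
  have card_C_sdiff : #(C \ D) + #D = #(C ∪ D) := card_sdiff_add_card C D
  rcases card_le_card_sdiff_add_card_inf le_rfl le_rfl hDC hle with h | h <;> omega

lemma card_le_card_stabilizer_of_forall_vadd_subset {A B : Finset G} {b : G} (hA : A.Nonempty)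
    (hAB : ∀ e ∈ A, (e - b) +ᵥ B ⊆ A) : #B ≤ Nat.card (stabilizer G A) := by
  have := finite_stabilizer_of_nonempty hA
  have sub_mem_stabilizer (y : B) : (y : G) - b ∈ stabilizer G A := by
    refine mem_stabilizer_finset'.2 fun e he ↦ ?_
    have swap : (y : G) - b + e = e - b + y := by abel
    rw [vadd_eq_add, swap]
    exact hAB e he (vadd_mem_vadd_finset y.2)
  rw [← Nat.card_eq_finsetCard]
  refine Nat.card_le_card_of_injective (fun y ↦ ⟨y - b, sub_mem_stabilizer y⟩) fun y z hyz ↦ ?_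
  exact Subtype.ext (sub_left_injective (congrArg Subtype.val hyz))

lemma exists_subset_add_card_add_card_le {A B : Finset G} {a b : G} (ha : a ∈ A) (hb : b ∈ B) :
    ∃ C ⊆ A + B, a + b ∈ C ∧ #A + #B ≤ #C + Nat.card (stabilizer G C) := by
  induction hn : #B using Nat.strong_induction_on generalizing A B with
  | _ n ih =>
  by_cases hAB : ∀ e ∈ A, (e - b) +ᵥ B ⊆ A
  · refine ⟨b +ᵥ A, ?_, ?_, ?_⟩
    · rw [add_comm A]; exact vadd_finset_subset_add hb
    · rw [add_comm a]; exact vadd_mem_vadd_finset ha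
    · rw [card_vadd_finset, stabilizer_vadd_eq_right, ← hn]
      gcongr
      exact card_le_card_stabilizer_of_forall_vadd_subset ⟨a, ha⟩ hAB
  · push Not at hAB
    obtain ⟨e, he, hsub⟩ := hAB
    have hlt : #(addDysonETransform (e - b) (A, B)).2 < #B :=
      card_lt_card <| inter_subset_left.ssubset_of_ne fun heq ↦
        hsub (vadd_finset_subset_iff.2 (inter_eq_left.1 heq))
    have hb' : b ∈ (addDysonETransform (e - b) (A, B)).2 :=
      mem_inter.2 ⟨hb, mem_neg_vadd_finset_iff.2 (by simpa using he)⟩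
    obtain ⟨C, hC_sub, hC_mem, hC_card⟩ :=
      ih _ (hn ▸ hlt) (mem_union_left ((e - b) +ᵥ B) ha) hb' rfl
    refine ⟨C, hC_sub.trans (addDysonETransform.subset _ (A, B)), hC_mem, ?_⟩
    exact hn ▸ (addDysonETransform.card (e - b) (A, B)).symm.trans_le hC_card

theorem card_add_card_le_card_add_add_card_stabilizer {A B : Finset G} (hA : A.Nonempty)
    (hB : B.Nonempty) : #A + #B ≤ #(A + B) + Nat.card (stabilizer G (A + B)) := by
  have cover : ∀ z ∈ A + B, ∃ C ⊆ A + B, z ∈ C ∧ #A + #B ≤ #C + Nat.card (stabilizer G C) := by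
    intro z hz
    obtain ⟨a, ha, b, hb, rfl⟩ := mem_add.1 hz
    exact exists_subset_add_card_add_card_le ha hb
  choose! C hC_sub hC_mem hC_card using cover
  have sup_eq : (A + B).sup' (hA.add hB) C = A + B :=
    le_antisymm (sup'_le _ _ hC_sub) fun z hz ↦ le_sup' C hz (hC_mem z hz)
  rw [← sup_eq]
  exact sup'_induction (p := fun S ↦ #A + #B ≤ #S + Nat.card (stabilizer G S)) _ _
    (fun S hS T hT ↦ (le_min hS hT).trans (min_card_add_card_stabilizer_le_union S T)) hC_card

theorem stmt_16_general {A B : Finset G} (hA : A.Nonempty) (hB : B.Nonempty)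
    (hexc : #(A - B) ≤ #A + #B - 2) :
    2 ≤ Nat.card (stabilizer G (A - B)) ∧ Nat.card (stabilizer G (A - B)) ≤ #A + #B - 2 := by
  have kneser : #A + #B ≤ #(A - B) + Nat.card (stabilizer G (A - B)) := by
    simpa only [sub_eq_add_neg, card_neg] using
      card_add_card_le_card_add_add_card_stabilizer hA hB.neg
  have := hA.card_pos
  have := hB.card_pos
  exact ⟨by omega, (card_le_card_of_le_stabilizer (hA.sub hB) le_rfl).trans hexc⟩

end AddCommGroup

lemma card_stab {L : ℕ} [NeZero L] (T : Finset (ZMod L)) :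
    #(stab T) = Nat.card (stabilizer (ZMod L) T) := by
  rw [← Nat.card_eq_finsetCard]
  exact Nat.card_congr (Equiv.subtypeEquivRight fun _ ↦ mem_filter_univ _)

lemma fdiff_eq_sub {L : ℕ} (A B : Finset (ZMod L)) : fdiff A B = A - B := image_sub_product

theorem stmt_16 (L : ℕ) [NeZero L] (A B : Finset (ZMod L))
    (hA : A.Nonempty) (hB : B.Nonempty)
    (hexc : (fdiff A B).card ≤ A.card + B.card - 2) :
    2 ≤ (stab (fdiff A B)).card ∧ (stab (fdiff A B)).card ≤ A.card + B.card - 2 := by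
  rw [fdiff_eq_sub] at hexc
  simpa only [card_stab, fdiff_eq_sub] using stmt_16_general hA hB hexc
end
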